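/- Let G be a finite connected simple graph, let w be an injective weight function from the edges of G to the reals, and let T be the (unique) minimum-weight spanning tree of G. Let e be an edge of T, and let w' be a weight function agreeing with w on every edge except e, with w'(e) > w(e), and with w' still injective. Let A and B be the vertex sets of the two connected components of T with e deleted. If no edge of G other than e joins A to B, or if the minimum-weight (under w') edge f ≠ e joining A to B satisfies w'(e) < w'(f), then T is the minimum-weight spanning tree of G under w'; otherwise (T ∖ {e}) ∪ {f} is the minimum-weight spanning tree of G under w'. -/

import Mathlib

open SimpleGraph

/-- The total weight of (the edges of) a graph. -/
noncomputable def totalWeight {V : Type*} (w : Sym2 V → ℝ) (H : SimpleGraph V) : ℝ :=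
  ∑ᶠ e ∈ H.edgeSet, w e

/-- `T` is a minimum-weight spanning tree of `G` with respect to the edge weights `w`. -/
def IsMinSpanningTree {V : Type*} (G : SimpleGraph V) (w : Sym2 V → ℝ)
    (T : SimpleGraph V) : Prop :=
  T ≤ G ∧ T.IsTree ∧ ∀ T' : SimpleGraph V, T' ≤ G → T'.IsTree →
    totalWeight w T ≤ totalWeight w T'


theorem reach_or {V : Type*} {T : SimpleGraph V} (hT : T.Connected) (a b x : V) :
    (T.deleteEdges {s(a, b)}).Reachable a x ∨ (T.deleteEdges {s(a, b)}).Reachable b x := by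
  classical
  obtain ⟨p⟩ := hT.preconnected x a
  induction p with
  | nil => exact Or.inl (Reachable.refl _)
  | @cons x y a h p ih =>
    by_cases he : s(x, y) = s(a, b)
    · rcases Sym2.eq_iff.1 he with ⟨rfl, rfl⟩ | ⟨rfl, rfl⟩
      · exact Or.inl (Reachable.refl _)
      · exact Or.inr (Reachable.refl _)
    · have : (T.deleteEdges {s(a, b)}).Adj y x := by
        rw [deleteEdges_adj]
        exact ⟨h.symm, fun h1 => he (Sym2.eq_swap.trans h1)⟩
      exact ih.imp (fun h' => h'.trans this.reachable) (fun h' => h'.trans this.reachable)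

theorem swap_eq {V : Type*} (T : SimpleGraph V) (e : Sym2 V) (c d : V) :
    SimpleGraph.fromEdgeSet ((T.edgeSet \ {e}) ∪ {s(c, d)}) = T.deleteEdges {e} ⊔ edge c d := by
  ext x y
  simp only [fromEdgeSet_adj, sup_adj, deleteEdges_adj, edge, Set.mem_union, Set.mem_diff,
    mem_edgeSet, Set.mem_singleton_iff]
  constructor
  · tauto
  · rintro (h | h)
    · exact ⟨Or.inl h, h.1.ne⟩
    · tauto

theorem swap_tree {V : Type*} {T : SimpleGraph V} (hT : T.IsTree) (a b c d : V)
    (h : ¬ (T.deleteEdges {s(a, b)}).Reachable c d) :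
    (SimpleGraph.fromEdgeSet ((T.edgeSet \ {s(a, b)}) ∪ {s(c, d)})).IsTree := by
  rw [swap_eq]
  have hac : (T.deleteEdges {s(a, b)} ⊔ edge c d).IsAcyclic :=
    IsAcyclic.sup_edge_of_not_reachable h (hT.isAcyclic.anti (deleteEdges_le _))
  have hm : ∀ {x y}, (T.deleteEdges {s(a, b)}).Reachable x y →
      (T.deleteEdges {s(a, b)} ⊔ edge c d).Reachable x y := fun h' => h'.mono le_sup_left
  have hne : c ≠ d := by rintro rfl; exact h (Reachable.refl _)
  have hcd : (T.deleteEdges {s(a, b)} ⊔ edge c d).Reachable c d := by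
    apply Adj.reachable
    rw [sup_adj]
    exact Or.inr (by simp [edge, hne])
  have hab : (T.deleteEdges {s(a, b)} ⊔ edge c d).Reachable a b := by
    rcases reach_or hT.connected a b c with h1 | h1 <;>
      rcases reach_or hT.connected a b d with h2 | h2
    · exact absurd (h1.symm.trans h2) h
    · exact (hm h1).trans (hcd.trans (hm h2).symm)
    · exact (hm h2).trans (hcd.symm.trans (hm h1).symm)
    · exact absurd (h1.symm.trans h2) h
  have hall : ∀ x, (T.deleteEdges {s(a, b)} ⊔ edge c d).Reachable a x := fun x =>
    (reach_or hT.connected a b x).elim hm (fun h' => hab.trans (hm h'))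
  haveI : Nonempty V := ⟨a⟩
  exact ⟨⟨fun x y => (hall x).symm.trans (hall y)⟩, hac⟩

theorem swap_weight {V : Type*} [Fintype V] (w : Sym2 V → ℝ) (T : SimpleGraph V) (e : Sym2 V)
    (he : e ∈ T.edgeSet) (c d : V) (hf : ¬ (T.deleteEdges {e}).Reachable c d) :
    totalWeight w (SimpleGraph.fromEdgeSet ((T.edgeSet \ {e}) ∪ {s(c, d)}))
      = totalWeight w T - w e + w s(c, d) := by
  have hne : c ≠ d := by rintro rfl; exact hf (Reachable.refl _)
  have hnm : s(c, d) ∉ T.edgeSet \ {e} := by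
    intro h
    apply hf
    apply Adj.reachable
    rw [deleteEdges_adj]
    exact ⟨h.1, h.2⟩
  have h1 : (SimpleGraph.fromEdgeSet ((T.edgeSet \ {e}) ∪ {s(c, d)})).edgeSet
      = insert s(c, d) (T.edgeSet \ {e}) := by
    rw [swap_eq, edgeSet_sup, edgeSet_deleteEdges, edge_edgeSet_of_ne hne, Set.union_singleton]
  have h2 : T.edgeSet = insert e (T.edgeSet \ {e}) := by
    rw [Set.insert_diff_singleton, Set.insert_eq_of_mem he]
  unfold totalWeight
  rw [h1, finsum_mem_insert w hnm (Set.toFinite _)]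
  conv_rhs => rw [h2]
  rw [finsum_mem_insert w (by simp) (Set.toFinite _)]
  ring

theorem weight_change {V : Type*} [Fintype V] (w w' : Sym2 V → ℝ) (T : SimpleGraph V) (e : Sym2 V)
    (he : e ∈ T.edgeSet) (h : ∀ f ∈ T.edgeSet, f ≠ e → w' f = w f) :
    totalWeight w' T = totalWeight w T - w e + w' e := by
  have h2 : T.edgeSet = insert e (T.edgeSet \ {e}) := by
    rw [Set.insert_diff_singleton, Set.insert_eq_of_mem he]
  unfold totalWeight
  rw [h2, finsum_mem_insert w (by simp) (Set.toFinite _),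
    finsum_mem_insert w' (by simp) (Set.toFinite _),
    finsum_mem_congr rfl (fun x hx => h x hx.1 hx.2)]
  ring

theorem mst_core {V : Type*} [Fintype V]
    (G : SimpleGraph V) (w w' : Sym2 V → ℝ)
    (T : SimpleGraph V) (hT : IsMinSpanningTree G w T)
    (u v : V) (huv : T.Adj u v)
    (hagree : ∀ f ∈ G.edgeSet, f ≠ s(u, v) → w' f = w f)
    (T' : SimpleGraph V) (hT'G : T' ≤ G) (hT' : T'.IsTree) :
    totalWeight w' T ≤ totalWeight w' T' ∨
    ∃ a b, (T.deleteEdges {s(u, v)}).Reachable u a ∧ (T.deleteEdges {s(u, v)}).Reachable v b ∧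
      G.Adj a b ∧ s(a, b) ≠ s(u, v) ∧
      totalWeight w' T - w' s(u, v) + w' s(a, b) ≤ totalWeight w' T' := by
  classical
  have hTw := weight_change w w' T s(u, v) huv
    (fun f hf => hagree f (edgeSet_mono hT.1 hf))
  by_cases he : s(u, v) ∈ T'.edgeSet
  · left
    have := weight_change w w' T' s(u, v) he (fun f hf => hagree f (edgeSet_mono hT'G hf))
    have := hT.2.2 T' hT'G hT'
    linarith
  · right
    have hbr : ¬ (T.deleteEdges {s(u, v)}).Reachable u v :=
      isBridge_iff.1 (isAcyclic_iff_forall_isBridge.1 hT.2.1.isAcyclic huv)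
    obtain ⟨p, hp, hpu⟩ := hT'.existsUnique_path u v
    obtain ⟨⟨⟨a, b⟩, hab⟩, hd, ha, hb⟩ := p.exists_boundary_dart
      {x | (T.deleteEdges {s(u, v)}).Reachable u x} (Reachable.refl _) hbr
    simp only [Set.mem_setOf_eq] at ha hb
    have hab : T'.Adj a b := hab
    have hge : s(a, b) ≠ s(u, v) := by rintro h; rw [← h] at he; exact he hab
    have hgp : s(a, b) ∈ p.edges := List.mem_map.2 ⟨_, hd, rfl⟩
    have hnr : ¬ (T'.deleteEdges {s(a, b)}).Reachable u v := by
      rw [reachable_deleteEdges_iff_exists_walk]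
      rintro ⟨q, hq⟩
      have := hpu q.bypass q.bypass_isPath
      rw [← this] at hgp
      exact hq (q.edges_bypass_subset hgp)
    refine ⟨a, b, ha, (reach_or hT.2.1.connected u v b).resolve_left hb, hT'G hab, hge, ?_⟩
    have h1 := hT.2.2 _ ?_ (swap_tree hT' a b u v hnr)
    · rw [swap_weight w T' _ hab u v hnr] at h1
      have h2 : totalWeight w' T' = totalWeight w T' := by
        unfold totalWeight
        exact finsum_mem_congr rfl (fun x hx => hagree x (edgeSet_mono hT'G hx)
          (by rintro rfl; exact he hx))
      have h3 := hagree s(a, b) (hT'G hab) hge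
      linarith
    · rw [swap_eq]
      refine sup_le ((deleteEdges_le _).trans hT'G) ?_
      rw [edge_le_iff]
      exact Or.inr (hT.1 huv)

/-- Correctness of the weight-increase update for dynamic minimum spanning trees.
Increase the weight of a tree edge `e = s(u,v)` of the minimum spanning tree `T`, and let
`A, B` be the two components of `T - e`.  If no other edge of `G` joins `A` to `B`, or the
minimum-weight such edge `f` satisfies `w'(e) < w'(f)`, then `T` remains minimum; otherwise
`(T \ {e}) ∪ {f}` is the new minimum spanning tree. -/
theorem mst_weight_increase_update {V : Type*} [Fintype V]
    (G : SimpleGraph V) (hG : G.Connected)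
    (w w' : Sym2 V → ℝ) (hw : Set.InjOn w G.edgeSet) (hw' : Set.InjOn w' G.edgeSet)
    (T : SimpleGraph V) (hT : IsMinSpanningTree G w T)
    (u v : V) (huv : T.Adj u v)
    (hagree : ∀ f ∈ G.edgeSet, f ≠ s(u, v) → w' f = w f)
    (hinc : w s(u, v) < w' s(u, v))
    (A B : Set V)
    (hA : A = {x | (T.deleteEdges {s(u, v)}).Reachable u x})
    (hB : B = {x | (T.deleteEdges {s(u, v)}).Reachable v x}) :
    ((∀ x ∈ A, ∀ y ∈ B, G.Adj x y → s(x, y) = s(u, v)) → IsMinSpanningTree G w' T) ∧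
    (∀ x y : V, x ∈ A → y ∈ B → G.Adj x y → s(x, y) ≠ s(u, v) →
      (∀ x' y' : V, x' ∈ A → y' ∈ B → G.Adj x' y' → s(x', y') ≠ s(u, v) →
        w' s(x, y) ≤ w' s(x', y')) →
      ((w' s(u, v) < w' s(x, y) → IsMinSpanningTree G w' T) ∧
       (¬ w' s(u, v) < w' s(x, y) →
         IsMinSpanningTree G w'
           (SimpleGraph.fromEdgeSet ((T.edgeSet \ {s(u, v)}) ∪ {s(x, y)}))))) := by
  subst hA hB
  have core := mst_core G w w' T hT u v huv hagree
  have hbr : ¬ (T.deleteEdges {s(u, v)}).Reachable u v :=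
    isBridge_iff.1 (isAcyclic_iff_forall_isBridge.1 hT.2.1.isAcyclic huv)
  refine ⟨fun h => ⟨hT.1, hT.2.1, fun T' h1 h2 => ?_⟩, ?_⟩
  · rcases core T' h1 h2 with h3 | ⟨a, b, ha, hb, hab, hne, h3⟩
    · exact h3
    · exact absurd (h a ha b hb hab) hne
  · intro x y hx hy hxy hne hmin
    refine ⟨fun hlt => ⟨hT.1, hT.2.1, fun T' h1 h2 => ?_⟩, fun hlt => ⟨?_, ?_, fun T' h1 h2 => ?_⟩⟩
    · rcases core T' h1 h2 with h3 | ⟨a, b, ha, hb, hab, hne', h3⟩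
      · exact h3
      · have := hmin a b ha hb hab hne'
        linarith
    · rw [swap_eq]
      refine sup_le ((deleteEdges_le _).trans hT.1) ?_
      rw [edge_le_iff]
      exact Or.inr hxy
    · exact swap_tree hT.2.1 u v x y
        (fun h => hbr ((Reachable.trans hx h).trans (Reachable.symm hy)))
    · rw [swap_weight w' T _ huv x y
        (fun h => hbr ((Reachable.trans hx h).trans (Reachable.symm hy)))]
      rcases core T' h1 h2 with h3 | ⟨a, b, ha, hb, hab, hne', h3⟩
      · linarith
      · have := hmin a b ha hb hab hne'
        linarith
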